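/- arXiv:1907.13438 — 6 statements merged into one kernel-verified Lean document; each statement's English description precedes it below -/
import Mathlib

section
/- Let A ∈ Mₙ(ℍ) be a nilpotent matrix (Aᵏ = 0 for some k). If the quaternionic numerical range W(A) is a closed disk, i.e. W(A) = 𝔻_ℍ(a, r) for some a ∈ ℍ and r ≥ 0, then its center is at the origin: W(A) = 𝔻_ℍ(0, r). -/
/-- The quaternionic numerical range of a square quaternionic matrix. -/
def qnr {ι : Type*} [Fintype ι] (A : Matrix ι ι (Quaternion ℝ)) : Set (Quaternion ℝ) :=
  {q | ∃ x : ι → Quaternion ℝ, (∑ i, ‖x i‖ ^ 2) = 1 ∧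
    q = ∑ i, ∑ j, star (x i) * A i j * x j}

/-!
The numerical range is invariant under conjugation by unit quaternions, so the center of a disk
`W(A)` commutes with all of them and is a real number `t`. View `ℍⁿ` as a complex inner product
space with scalars acting on the right: `A` becomes a complex linear operator `T`, whose complex
numerical range, the complex part of `W(A)`, is the disk of radius `r` around `t`.

Put `S = T - t`. For `|z| = 1`, the real part of `⟪x, z S x⟫` attains its maximum `r` over the unit
sphere at some `x`, so `z S x + z̄ S† x = 2 r x`, that is `(z² S - 2 r z + S†) x = 0`. If `S` were
injective, this quadratic eigenvalue problem would have only finitely many solutions `z`. So `t` is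
an eigenvalue of `A`, and a nilpotent matrix has no other real eigenvalue than `0`.
-/

open Metric Module Quaternion
open scoped ComplexConjugate InnerProduct InnerProductSpace Matrix

section NumericalRange

variable {𝕜 E : Type*} [RCLike 𝕜] [NormedAddCommGroup E] [InnerProductSpace 𝕜 E]

/-- The numerical range `W(T) = {⟪x, T x⟫ : ‖x‖ = 1}` of a bounded operator. The operator stands in
the second slot because the inner product is conjugate linear in the first. -/
def numericalRange (T : E →L[𝕜] E) : Set 𝕜 :=
  (fun x => ⟪x, T x⟫_𝕜) '' sphere 0 1

lemma numericalRange_sub_smul_one (T : E →L[𝕜] E) (c : 𝕜) :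
    numericalRange (T - c • 1) = (· - c) '' numericalRange T := by
  rw [numericalRange, numericalRange, Set.image_image]
  refine Set.image_congr fun x hx => ?_
  have hx : ‖x‖ = 1 := mem_sphere_zero_iff_norm.1 hx
  simp [inner_sub_right, inner_smul_right, inner_self_eq_norm_sq_to_K, hx]

lemma add_adjoint_apply_eq_smul_of_isMaxOn [CompleteSpace E] (T : E →L[𝕜] E) {x : E}
    (hx : ‖x‖ = 1) (hmax : IsMaxOn (fun y => RCLike.re ⟪y, T y⟫_𝕜) (sphere 0 1) x) :
    T x + (T†) x = ((2 * RCLike.re ⟪x, T x⟫_𝕜 : ℝ) : 𝕜) • x := by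
  have hre (y : E) : (T + T†).reApplyInnerSelf y = 2 * RCLike.re ⟪y, T y⟫_𝕜 := by
    simp [ContinuousLinearMap.reApplyInnerSelf_apply, inner_add_left,
      ContinuousLinearMap.adjoint_inner_left, inner_re_symm (T y), two_mul]
  have hextr : IsMaxOn (T + T†).reApplyInnerSelf (sphere 0 ‖x‖) x := by
    rw [hx]
    intro y hy
    simpa [hre] using hmax hy
  have hself : IsSelfAdjoint (T + T†) := IsSelfAdjoint.add_star_self T
  simpa [ContinuousLinearMap.rayleighQuotient, hre, hx] using
    hself.eq_smul_self_of_isLocalExtrOn (Or.inr hextr.localize)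

end NumericalRange

lemma finite_setOf_quadratic_eigenvalue {K V : Type*} [Field K] [AddCommGroup V] [Module K V]
    [FiniteDimensional K V] {f : End K V} (hf : Function.Injective f) (g h : End K V) :
    {z : K | ∃ x ≠ 0, z ^ 2 • f x + z • g x + h x = 0}.Finite := by
  let e := LinearEquiv.ofInjectiveEndo f hf
  have he (x : V) : f (e.symm x) = x := e.apply_symm_apply x
  -- Linearization: `(z • x, x)` is an eigenvector of the companion operator on `V × V`.
  let companion : End K (V × V) :=
    (-(e.symm.toLinearMap ∘ₗ g.coprod h)).prod (LinearMap.fst K V V)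
  refine companion.finite_hasEigenvalue.subset ?_
  rintro z ⟨x, hx, hzx⟩
  refine End.hasEigenvalue_of_hasEigenvector (x := (z • x, x)) ⟨?_, by simp [hx]⟩
  rw [End.mem_eigenspace_iff]
  refine Prod.ext (hf ?_) rfl
  have : -(z • g x + h x) = z ^ 2 • f x := by rw [neg_eq_iff_add_eq_zero, ← hzx]; abel
  simpa [companion, he, smul_smul, ← sq] using this

section ComplexDisk

variable {E : Type*} [NormedAddCommGroup E] [InnerProductSpace ℂ E]

lemma exists_quadratic_adjoint_eq_zero [CompleteSpace E] {T : E →L[ℂ] E} {r : ℝ} (hr : 0 ≤ r)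
    (hT : numericalRange T = closedBall 0 r) {z : ℂ} (hz : ‖z‖ = 1) :
    ∃ x ≠ 0, z ^ 2 • T x + z • (-(2 * r : ℂ)) • x + (T†) x = 0 := by
  have hzz : z * conj z = 1 := by simp [Complex.mul_conj', hz]
  have hmem : conj z * r ∈ numericalRange T := by simp [hT, hz, abs_of_nonneg hr]
  obtain ⟨x, hx, hxz : ⟪x, T x⟫_ℂ = conj z * r⟩ := hmem
  have hx : ‖x‖ = 1 := mem_sphere_zero_iff_norm.1 hx
  have hre : ⟪x, (z • T) x⟫_ℂ = r := by
    simp [hxz, ← mul_assoc, hzz]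
  have hmax : IsMaxOn (fun y => RCLike.re ⟪y, (z • T) y⟫_ℂ) (sphere 0 1) x := by
    intro y hy
    have hy : ⟪y, T y⟫_ℂ ∈ closedBall 0 r := hT ▸ Set.mem_image_of_mem _ hy
    calc RCLike.re ⟪y, (z • T) y⟫_ℂ ≤ ‖⟪y, (z • T) y⟫_ℂ‖ := RCLike.re_le_norm _
      _ = ‖⟪y, T y⟫_ℂ‖ := by simp [hz]
      _ ≤ r := mem_closedBall_zero_iff.1 hy
      _ = RCLike.re ⟪x, (z • T) x⟫_ℂ := by rw [hre]; rfl
  have hker : z • T x + conj z • (T†) x = (2 * r : ℂ) • x := by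
    have := add_adjoint_apply_eq_smul_of_isMaxOn (z • T) hx hmax
    rw [hre] at this
    simpa [map_smulₛₗ] using this
  refine ⟨x, by rintro rfl; simp at hx, ?_⟩
  calc z ^ 2 • T x + z • (-(2 * r : ℂ)) • x + (T†) x
      = z • (z • T x + conj z • (T†) x) - z • (2 * r : ℂ) • x := by
        rw [smul_add, smul_smul z (conj z), hzz]
        module
    _ = 0 := by rw [hker, sub_self]

theorem hasEigenvalue_of_numericalRange_eq_closedBall [FiniteDimensional ℂ E] (T : E →L[ℂ] E)
    {c : ℂ} {r : ℝ} (hr : 0 ≤ r) (hT : numericalRange T = closedBall c r) :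
    End.HasEigenvalue (T : End ℂ E) c := by
  have := FiniteDimensional.complete ℂ E
  let S : E →L[ℂ] E := T - c • 1
  have hS : numericalRange S = closedBall 0 r := by
    rw [numericalRange_sub_smul_one, hT]
    simpa using (IsometryEquiv.subRight c).image_closedBall c r
  by_contra hc
  have hinj : Function.Injective S := by
    rw [injective_iff_map_eq_zero]
    intro x hx
    by_contra hx0
    exact hc (End.hasEigenvalue_of_hasEigenvector
      ⟨End.mem_eigenspace_iff.2 (by simpa [S, sub_eq_zero] using hx), hx0⟩)
  have hfin := finite_setOf_quadratic_eigenvalue (f := (S : End ℂ E)) hinj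
    ((-(2 * r : ℂ)) • 1) (S† : E →L[ℂ] E)
  have hcircle : (sphere (0 : ℂ) 1).Infinite :=
    (isPreconnected_sphere (by simp [Complex.rank_real_complex]) 0 1).infinite_of_nontrivial
      ⟨1, by simp, -1, by simp, by norm_num⟩
  exact hcircle (hfin.subset fun z hz =>
    exists_quadratic_adjoint_eq_zero hr hS (mem_sphere_zero_iff_norm.1 hz))

end ComplexDisk

section Center

lemma eq_of_closedBall_subset_closedBall {E : Type*} [NormedAddCommGroup E] [NormedSpace ℝ E]
    {a b : E} {r : ℝ} (hr : 0 ≤ r) (h : closedBall a r ⊆ closedBall b r) : a = b := by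
  by_contra hab
  have hd : 0 < ‖a - b‖ := norm_sub_pos_iff.2 hab
  let p : E := a + (r / ‖a - b‖) • (a - b)
  have hp : p ∈ closedBall b r := h (by simp [p, norm_smul, hd.ne', abs_of_nonneg hr])
  have hdist : ‖p - b‖ = ‖a - b‖ + r := by
    calc ‖p - b‖ = ‖(1 + r / ‖a - b‖) • (a - b)‖ := by congr 1; module
      _ = ‖a - b‖ + r := by
        rw [norm_smul, Real.norm_of_nonneg (by positivity)]
        field_simp
  rw [mem_closedBall_iff_norm, hdist] at hp
  linarith

variable {ι : Type*} [Fintype ι] {A : Matrix ι ι ℍ[ℝ]}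

lemma star_mul_mul_mem_qnr {q u : ℍ[ℝ]} (hq : q ∈ qnr A) (hu : ‖u‖ = 1) :
    star u * q * u ∈ qnr A := by
  obtain ⟨x, hx, rfl⟩ := hq
  refine ⟨fun i => x i * u, by simpa [hu] using hx, ?_⟩
  simp only [Finset.mul_sum, Finset.sum_mul, star_mul, mul_assoc]

lemma commute_of_qnr_eq_closedBall {a : ℍ[ℝ]} {r : ℝ} (hr : 0 ≤ r)
    (hA : qnr A = closedBall a r) {u : ℍ[ℝ]} (hu : ‖u‖ = 1) : Commute a u := by
  have hu_star : u * star u = 1 := by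
    simp [self_mul_star, normSq_eq_norm_mul_self, hu]
  have hau : a = u * a * star u := by
    refine eq_of_closedBall_subset_closedBall hr fun q hq => ?_
    have hconj : star u * q * u ∈ closedBall a r := hA ▸ star_mul_mul_mem_qnr (hA ▸ hq) hu
    have hdist : q - u * a * star u = u * (star u * q * u - a) * star u := by
      calc q - u * a * star u = u * star u * q * (u * star u) - u * a * star u := by simp [hu_star]
        _ = u * (star u * q * u - a) * star u := by noncomm_ring
    rw [mem_closedBall_iff_norm] at hconj ⊢
    simpa [hdist, hu] using hconj
  calc a * u = u * a * star u * u := by rw [← hau]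
    _ = u * a := by rw [mul_assoc, mul_eq_one_comm.1 hu_star, mul_one]

lemma coe_re_eq_self_of_forall_commute {a : ℍ[ℝ]} (h : ∀ u : ℍ[ℝ], ‖u‖ = 1 → Commute a u) :
    (a.re : ℍ[ℝ]) = a := by
  let i : ℍ[ℝ] := ⟨0, 1, 0, 0⟩
  let j : ℍ[ℝ] := ⟨0, 0, 1, 0⟩
  have norm_eq_one {u : ℍ[ℝ]} (hu : normSq u = 1) : ‖u‖ = 1 := by
    rwa [normSq_eq_norm_mul_self, ← sq, pow_eq_one_iff_of_nonneg (norm_nonneg u) two_ne_zero] at hu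
  have hi : a * i = i * a := h i (norm_eq_one (by rw [normSq_def']; simp [i]))
  have hj : a * j = j * a := h j (norm_eq_one (by rw [normSq_def']; simp [j]))
  have hi_J : a.imK = -a.imK := by
    have := congrArg QuaternionAlgebra.imJ hi
    simp only [imJ_mul] at this
    simpa [i] using this
  have hi_K : -a.imJ = a.imJ := by
    have := congrArg QuaternionAlgebra.imK hi
    simp only [imK_mul] at this
    simpa [i] using this
  have hj_K : a.imI = -a.imI := by
    have := congrArg QuaternionAlgebra.imK hj
    simp only [imK_mul] at this
    simpa [j] using this
  ext <;> simp <;> linarith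

end Center

lemma mem_spectrum_of_mulVec_eq_smul {ι K R : Type*} [Fintype ι] [DecidableEq ι] [CommRing K]
    [Ring R] [Algebra K R] {A : Matrix ι ι R} {t : K} {v : ι → R} (hv : v ≠ 0)
    (h : A *ᵥ v = t • v) : t ∈ spectrum K A := by
  intro hunit
  apply hv
  apply Matrix.mulVec_injective_of_isUnit hunit
  simp [Matrix.sub_mulVec, h, Algebra.algebraMap_eq_smul_one, Matrix.smul_mulVec]

lemma eq_zero_of_mem_spectrum_of_isNilpotent {K R : Type*} [Field K] [Ring R] [Algebra K R]
    {a : R} (ha : IsNilpotent a) {t : K} (ht : t ∈ spectrum K a) : t = 0 := by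
  cases subsingleton_or_nontrivial R
  · simp at ht
  obtain ⟨k, hk⟩ := ha
  have := spectrum.pow_mem_pow a k ht
  rw [hk, spectrum.zero_eq] at this
  exact eq_zero_of_pow_eq_zero this

section RightComplexStructure

/-- The complex part `a + b i` of the quaternion `a + b i + c j + d k`; it turns the quaternionic
form `p* q` into a complex inner product. -/
def complexPart : ℍ[ℝ] →ₗ[ℝ] ℂ where
  toFun q := ⟨q.re, q.imI⟩
  map_add' _ _ := rfl
  map_smul' c q := by apply Complex.ext <;> simp

lemma re_complexPart (q : ℍ[ℝ]) : (complexPart q).re = q.re := rfl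

lemma im_complexPart (q : ℍ[ℝ]) : (complexPart q).im = q.imI := rfl

lemma complexPart_coe (z : ℂ) : complexPart z = z := rfl

lemma complexPart_star (q : ℍ[ℝ]) : complexPart (star q) = conj (complexPart q) := by
  apply Complex.ext <;> simp [re_complexPart, im_complexPart]

lemma complexPart_coe_mul (z : ℂ) (q : ℍ[ℝ]) : complexPart (z * q) = z * complexPart q := by
  apply Complex.ext <;> simp [re_complexPart, im_complexPart]

lemma norm_coeComplex (z : ℂ) : ‖(z : ℍ[ℝ])‖ = ‖z‖ := by
  rw [← sq_eq_sq₀ (norm_nonneg _) (norm_nonneg _), sq, ← normSq_eq_norm_mul_self, normSq_def',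
    ← Complex.normSq_eq_norm_sq, Complex.normSq_apply]
  simp [sq]

lemma star_coeComplex (z : ℂ) : star (z : ℍ[ℝ]) = conj z := by
  ext <;> simp

lemma norm_complexPart_le (q : ℍ[ℝ]) : ‖complexPart q‖ ≤ ‖q‖ := by
  rw [← sq_le_sq₀ (norm_nonneg _) (norm_nonneg _), sq ‖q‖, ← normSq_eq_norm_mul_self, normSq_def',
    ← Complex.normSq_eq_norm_sq, Complex.normSq_apply, re_complexPart,
    im_complexPart]
  nlinarith [sq_nonneg q.imJ, sq_nonneg q.imK]

lemma complexPart_image_closedBall (c : ℂ) (r : ℝ) :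
    complexPart '' closedBall (c : ℍ[ℝ]) r = closedBall c r := by
  ext z
  constructor
  · rintro ⟨q, hq, rfl⟩
    rw [mem_closedBall_iff_norm] at hq ⊢
    rw [← complexPart_coe c, ← map_sub]
    exact (norm_complexPart_le _).trans hq
  · intro hz
    refine ⟨z, ?_, complexPart_coe z⟩
    rw [mem_closedBall_iff_norm] at hz ⊢
    rwa [← coe_ofComplex, ← map_sub, coe_ofComplex, norm_coeComplex]

/-- `ℍ` as a complex inner product space, with scalars acting by right multiplication so that
left multiplication by a quaternion is complex linear. -/
noncomputable abbrev rightInnerProductSpace : InnerProductSpace ℂ ℍ[ℝ] where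
  smul z q := q * z
  one_smul q := by change q * ((1 : ℂ) : ℍ[ℝ]) = q; simp
  mul_smul z w q := by
    change q * ((z * w : ℂ) : ℍ[ℝ]) = q * w * z
    rw [mul_comm, coeComplex_mul, mul_assoc]
  smul_zero z := zero_mul _
  smul_add z p q := add_mul p q _
  add_smul z w q := by
    change q * ((z + w : ℂ) : ℍ[ℝ]) = q * z + q * w
    rw [coeComplex_add, mul_add]
  zero_smul q := by change q * ((0 : ℂ) : ℍ[ℝ]) = 0; simp
  norm_smul_le z q := by
    change ‖q * (z : ℍ[ℝ])‖ ≤ ‖z‖ * ‖q‖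
    rw [norm_mul, norm_coeComplex, mul_comm]
  inner p q := complexPart (star p * q)
  norm_sq_eq_re_inner q := by
    change ‖q‖ ^ 2 = (complexPart (star q * q)).re
    rw [star_mul_self, normSq_eq_norm_mul_self, ← sq]
    rfl
  conj_inner_symm p q := by rw [← complexPart_star, star_mul, star_star]
  add_left p q s := by rw [star_add, add_mul, map_add]
  smul_left p q z := by
    change complexPart (star (p * (z : ℍ[ℝ])) * q) = _
    rw [star_mul, mul_assoc, star_coeComplex, complexPart_coe_mul]

attribute [local instance] rightInnerProductSpace

lemma right_smul_def (z : ℂ) (q : ℍ[ℝ]) : z • q = q * z := rfl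

lemma right_inner_def (p q : ℍ[ℝ]) : ⟪p, q⟫_ℂ = complexPart (star p * q) := rfl

lemma finite_rightInnerProductSpace : Module.Finite ℂ ℍ[ℝ] := by
  have : IsScalarTower ℝ ℂ ℍ[ℝ] := by
    refine ⟨fun t z q => ?_⟩
    change q * ((t • z : ℂ) : ℍ[ℝ]) = t • (q * (z : ℍ[ℝ]))
    rw [Complex.real_smul, coeComplex_mul, coeComplex_coe, ← mul_assoc, ← coe_commutes, mul_assoc,
      coe_mul_eq_smul]
  exact Module.Finite.of_restrictScalars_finite ℝ ℂ _

attribute [local instance] finite_rightInnerProductSpace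

variable {ι : Type*} [Fintype ι]

/-- Left multiplication of quaternionic column vectors by `A`, as a complex linear operator. -/
noncomputable def mulVecOperator (A : Matrix ι ι ℍ[ℝ]) :
    PiLp 2 (fun _ : ι => ℍ[ℝ]) →L[ℂ] PiLp 2 (fun _ : ι => ℍ[ℝ]) :=
  LinearMap.toContinuousLinearMap
    { toFun := fun x => WithLp.toLp 2 (A *ᵥ x.ofLp)
      map_add' := fun x y => by simp [Matrix.mulVec_add]
      map_smul' := fun z x => by
        ext1 i
        simp [Matrix.mulVec, dotProduct, right_smul_def, Finset.sum_mul, mul_assoc] }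

lemma mulVecOperator_apply (A : Matrix ι ι ℍ[ℝ]) (x : PiLp 2 (fun _ : ι => ℍ[ℝ])) :
    mulVecOperator A x = WithLp.toLp 2 (A *ᵥ x.ofLp) := rfl

lemma inner_mulVecOperator (A : Matrix ι ι ℍ[ℝ]) (x : PiLp 2 (fun _ : ι => ℍ[ℝ])) :
    ⟪x, mulVecOperator A x⟫_ℂ = complexPart (∑ i, ∑ j, star (x i) * A i j * x j) := by
  simp [PiLp.inner_apply, right_inner_def, mulVecOperator_apply, Matrix.mulVec, dotProduct,
    Finset.mul_sum, mul_assoc]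

lemma numericalRange_mulVecOperator (A : Matrix ι ι ℍ[ℝ]) :
    numericalRange (mulVecOperator A) = complexPart '' qnr A := by
  ext z
  constructor
  · rintro ⟨x, hx, rfl⟩
    refine ⟨_, ⟨x, ?_, rfl⟩, (inner_mulVecOperator A x).symm⟩
    rw [← PiLp.norm_sq_eq_of_L2, mem_sphere_zero_iff_norm.1 hx, one_pow]
  · rintro ⟨_, ⟨x, hx, rfl⟩, rfl⟩
    refine ⟨WithLp.toLp 2 x, ?_, inner_mulVecOperator A _⟩
    rw [mem_sphere_zero_iff_norm, PiLp.norm_eq_of_L2, hx, Real.sqrt_one]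

variable [DecidableEq ι]

lemma mem_spectrum_of_hasEigenvalue_mulVecOperator {A : Matrix ι ι ℍ[ℝ]} {t : ℝ}
    (h : End.HasEigenvalue (mulVecOperator A : End ℂ (PiLp 2 (fun _ : ι => ℍ[ℝ]))) t) :
    t ∈ spectrum ℝ A := by
  obtain ⟨x, hx⟩ := h.exists_hasEigenvector
  have hAx : mulVecOperator A x = (t : ℂ) • x := hx.apply_eq_smul
  refine mem_spectrum_of_mulVec_eq_smul (v := x.ofLp) (by simpa using hx.2) (funext fun i => ?_)
  calc (A *ᵥ x.ofLp) i = x i * ((t : ℂ) : ℍ[ℝ]) := congrArg (fun y => y.ofLp i) hAx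
    _ = t • x i := by rw [coeComplex_coe, mul_coe_eq_smul]

theorem nilpotent_disk_center_zero_general (A : Matrix ι ι ℍ[ℝ]) {a : ℍ[ℝ]} {r : ℝ} (hr : 0 ≤ r)
    (hA : qnr A = closedBall a r) : ∃ t ∈ spectrum ℝ A, (t : ℍ[ℝ]) = a := by
  obtain ⟨t, rfl⟩ : ∃ t : ℝ, (t : ℍ[ℝ]) = a :=
    ⟨a.re, coe_re_eq_self_of_forall_commute fun _ => commute_of_qnr_eq_closedBall hr hA⟩
  have hW : numericalRange (mulVecOperator A) = closedBall (t : ℂ) r := by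
    rw [numericalRange_mulVecOperator, hA, ← coeComplex_coe, complexPart_image_closedBall]
  exact ⟨t, mem_spectrum_of_hasEigenvalue_mulVecOperator
    (hasEigenvalue_of_numericalRange_eq_closedBall _ hr hW), rfl⟩

end RightComplexStructure

/-- If `A` is a nilpotent quaternionic matrix and its numerical range is a
closed disk `𝔻_ℍ(a, r)`, then in fact `W(A) = 𝔻_ℍ(0, r)`. -/
theorem nilpotent_disk_center_zero {n : ℕ} (A : Matrix (Fin n) (Fin n) (Quaternion ℝ))
    (hA : IsNilpotent A) (a : Quaternion ℝ) (r : ℝ) (hr : 0 ≤ r)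
    (h : qnr A = Metric.closedBall a r) :
    qnr A = Metric.closedBall (0 : Quaternion ℝ) r := by
  obtain ⟨t, ht, rfl⟩ := nilpotent_disk_center_zero_general A hr h
  simpa [eq_zero_of_mem_spectrum_of_isNilpotent hA ht] using h
end

section
/- Let A = [a_{ij}] ∈ Mₙ(ℍ) be strictly upper triangular (a_{ij} = 0 for i ≥ j) and a tree matrix, and let β = (β₁,…,βₙ) ∈ S⁺_{ℝⁿ}. Then the union over all z₁,…,zₙ of unit quaternions of the singletons {∑_{i,j=1}^n βᵢβⱼ zᵢ* a_{ij} zⱼ} equals the Minkowski sum of spheres ∑_{i,j=1}^n 𝕊_ℍ(0, βᵢβⱼ|a_{ij}|), i.e. it equals {∑_{i,j=1}^n s_{ij} : s_{ij} ∈ ℍ, |s_{ij}| = βᵢβⱼ|a_{ij}| for all i,j}. -/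
/-- The undirected graph associated with a quaternionic matrix `A`: distinct vertices `i, j`
are adjacent iff `A i j ≠ 0` or `A j i ≠ 0`. -/
def graphOf {n : ℕ} (A : Matrix (Fin n) (Fin n) (Quaternion ℝ)) : SimpleGraph (Fin n) :=
  SimpleGraph.fromRel (fun i j => A i j ≠ 0)

/-!
Absorb the weights `β i * β j ≥ 0` into the entries `a i j`, which keeps the zero entries at zero
and scales the radii accordingly. Prescribe a point `s i j` on each sphere. If `a i j ≠ 0`, then
`a j i = 0`, and the equation `star (z i) * a i j * z j = s i j` determines either of the unit
elements `z i`, `z j` from the other. Choose `z` arbitrarily at one root of each component of the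
graph and solve these equations along the paths leaving the roots; as the graph has no cycles, no
vertex is reached twice.
-/

section Labelling

variable {V X : Type*} {G : SimpleGraph V}

theorem eq_concat_or_eq_concat_of_isAcyclic (hG : G.IsAcyclic) {r u v : V} {p : G.Walk r u}
    {q : G.Walk r v} (hp : p.IsPath) (hq : q.IsPath) (h : G.Adj u v) :
    q = p.concat h ∨ p = q.concat h.symm := by
  by_cases hu : u ∈ q.support
  · exact .inl <| hG.path_concat hp hq h hu
  · have hv : v ∈ p.support := hG.mem_support_of_ne_mem_support_of_adj_of_isPath hp hq h hu
    exact .inr <| hG.path_concat hq hp h.symm hv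

theorem exists_labelling_of_isAcyclic [Nonempty X] (hG : G.IsAcyclic) {R : V → V → X → X → Prop}
    (hsymm : ∀ u v x y, R u v x y → R v u y x)
    (hstep : ∀ u v, G.Adj u v → ∀ x, ∃ y, R u v x y) :
    ∃ z : V → X, ∀ u v, G.Adj u v → R u v (z u) (z v) := by
  choose! next hnext using hstep
  let x₀ : X := Classical.arbitrary X
  let label {r v : V} (p : G.Walk r v) : X := p.darts.foldl (fun x d ↦ next d.fst d.snd x) x₀
  have rel_label_concat {r u v : V} (p : G.Walk r u) (h : G.Adj u v) :
      R u v (label p) (label (p.concat h)) := by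
    simpa [label] using hnext u v h (label p)
  have rel_label {r u v : V} {p : G.Walk r u} {q : G.Walk r v} (hp : p.IsPath) (hq : q.IsPath)
      (h : G.Adj u v) : R u v (label p) (label q) := by
    rcases eq_concat_or_eq_concat_of_isAcyclic hG hp hq h with rfl | rfl
    · exact rel_label_concat p h
    · exact hsymm _ _ _ _ (rel_label_concat q h.symm)
  have exists_path (c : G.ConnectedComponent) (v : V) (hv : G.connectedComponentMk v = c) :
      ∃ p : G.Walk c.out v, p.IsPath :=
    (SimpleGraph.ConnectedComponent.exact (c.out_eq.trans hv.symm)).exists_isPath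
  choose path hpath using exists_path
  let z (v : V) : X := label (path _ v rfl)
  have z_eq (c : G.ConnectedComponent) (v : V) (hv : G.connectedComponentMk v = c) :
      z v = label (path c v hv) := by
    subst hv
    rfl
  refine ⟨z, fun u v h ↦ ?_⟩
  rw [z_eq _ v (SimpleGraph.ConnectedComponent.sound h.symm.reachable)]
  exact rel_label (hpath _ u rfl) (hpath _ v _) h

end Labelling

section NormedDivisionRing

variable {K : Type*} [NormedDivisionRing K]

theorem exists_norm_eq_one_mul_left_eq {a s : K} (h : ‖s‖ = ‖a‖) :
    ∃ x : K, ‖x‖ = 1 ∧ x * a = s := by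
  rcases eq_or_ne a 0 with rfl | ha
  · exact ⟨1, norm_one, by simpa [eq_comm] using h⟩
  · exact ⟨s * a⁻¹, by simp [h, ha], inv_mul_cancel_right₀ ha s⟩

theorem exists_norm_eq_one_mul_right_eq {a s : K} (h : ‖s‖ = ‖a‖) :
    ∃ y : K, ‖y‖ = 1 ∧ a * y = s := by
  rcases eq_or_ne a 0 with rfl | ha
  · exact ⟨1, norm_one, by simpa [eq_comm] using h⟩
  · exact ⟨a⁻¹ * s, by simp [h, ha], mul_inv_cancel_left₀ ha s⟩

variable [StarAddMonoid K] [NormedStarGroup K]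

theorem norm_star_mul_mul_of_norm_eq_one {x y : K} (hx : ‖x‖ = 1) (hy : ‖y‖ = 1) (a : K) :
    ‖star x * a * y‖ = ‖a‖ := by
  simp [hx, hy]

theorem exists_norm_eq_one_star_mul_mul_eq {a b s t x : K} (hab : a = 0 ∨ b = 0)
    (hs : ‖s‖ = ‖a‖) (ht : ‖t‖ = ‖b‖) (hx : ‖x‖ = 1) :
    ∃ y : K, ‖y‖ = 1 ∧ star x * a * y = s ∧ star y * b * x = t := by
  rcases hab with rfl | rfl
  · obtain rfl : s = 0 := by simpa using hs
    obtain ⟨y, hy, hyt⟩ := exists_norm_eq_one_mul_left_eq (a := b * x) (s := t) (by simp [ht, hx])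
    exact ⟨star y, by rwa [norm_star], by simp, by rw [star_star, mul_assoc, hyt]⟩
  · obtain rfl : t = 0 := by simpa using ht
    obtain ⟨y, hy, hys⟩ :=
      exists_norm_eq_one_mul_right_eq (a := star x * a) (s := s) (by simp [hs, hx])
    exact ⟨y, hy, hys, by simp⟩

variable {V : Type*} {G : SimpleGraph V} {B : Matrix V V K}

theorem exists_norm_eq_one_forall_star_mul_mul_eq (hG : G.IsAcyclic)
    (hadj : ∀ i j, B i j ≠ 0 → G.Adj i j) (hzero : ∀ i j, B i j = 0 ∨ B j i = 0)
    {s : V → V → K} (hs : ∀ i j, ‖s i j‖ = ‖B i j‖) :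
    ∃ z : V → K, (∀ k, ‖z k‖ = 1) ∧ ∀ i j, star (z i) * B i j * z j = s i j := by
  have : Nonempty {x : K // ‖x‖ = 1} := ⟨1, norm_one⟩
  obtain ⟨z, hz⟩ := exists_labelling_of_isAcyclic (X := {x : K // ‖x‖ = 1}) hG
    (R := fun i j x y ↦ star x.1 * B i j * y = s i j ∧ star y.1 * B j i * x = s j i)
    (fun _ _ _ _ h ↦ h.symm)
    (fun i j _ ⟨_, hx⟩ ↦
      let ⟨y, hy, hxy⟩ := exists_norm_eq_one_star_mul_mul_eq (hzero i j) (hs i j) (hs j i) hx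
      ⟨⟨y, hy⟩, hxy⟩)
  refine ⟨fun k ↦ z k, fun k ↦ (z k).2, fun i j ↦ ?_⟩
  by_cases hB : B i j = 0
  · have hs₀ : s i j = 0 := by simpa [hB] using hs i j
    simp [hB, hs₀]
  · exact (hz i j (hadj i j hB)).1

theorem tree_matrix_sphere_sum_general [Fintype V] (hG : G.IsAcyclic)
    (hadj : ∀ i j, B i j ≠ 0 → G.Adj i j) (hzero : ∀ i j, B i j = 0 ∨ B j i = 0) :
    {q : K | ∃ z : V → K, (∀ k, ‖z k‖ = 1) ∧ q = ∑ i, ∑ j, star (z i) * B i j * z j} =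
    {q : K | ∃ s : V → V → K, (∀ i j, ‖s i j‖ = ‖B i j‖) ∧ q = ∑ i, ∑ j, s i j} := by
  ext q
  constructor
  · rintro ⟨z, hz, rfl⟩
    exact ⟨_, fun i j ↦ norm_star_mul_mul_of_norm_eq_one (hz i) (hz j) (B i j), rfl⟩
  · rintro ⟨s, hs, rfl⟩
    obtain ⟨z, hz, hzs⟩ := exists_norm_eq_one_forall_star_mul_mul_eq hG hadj hzero hs
    exact ⟨z, hz, by simp only [hzs]⟩

end NormedDivisionRing

/-- For a strictly upper triangular tree matrix `A` and `β ∈ S⁺_{ℝⁿ}`, the union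
over unit quaternions `z₁, …, zₙ` of the singletons `{∑ᵢⱼ βᵢβⱼ zᵢ* aᵢⱼ zⱼ}` equals the
Minkowski sum of the spheres `𝕊_ℍ(0, βᵢβⱼ|aᵢⱼ|)`. -/
theorem tree_matrix_sphere_sum {n : ℕ} (A : Matrix (Fin n) (Fin n) (Quaternion ℝ))
    (hupper : ∀ i j, j ≤ i → A i j = 0)
    (htree : (graphOf A).IsTree)
    (β : Fin n → ℝ) (hβ0 : ∀ i, 0 ≤ β i) (hβ1 : (∑ i, β i ^ 2) = 1) :
    {q : Quaternion ℝ | ∃ z : Fin n → Quaternion ℝ, (∀ k, ‖z k‖ = 1) ∧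
        q = ∑ i, ∑ j, (β i * β j) • (star (z i) * A i j * z j)} =
    {q : Quaternion ℝ | ∃ s : Fin n → Fin n → Quaternion ℝ,
        (∀ i j, ‖s i j‖ = β i * β j * ‖A i j‖) ∧ q = ∑ i, ∑ j, s i j} := by
  have hadj : ∀ i j, A i j ≠ 0 → (graphOf A).Adj i j := fun i j h ↦
    ⟨(not_le.mp (mt (hupper i j) h)).ne, .inl h⟩
  have hzero : ∀ i j, A i j = 0 ∨ A j i = 0 := fun i j ↦
    (le_total j i).imp (hupper i j) (hupper j i)
  simpa [norm_smul, abs_of_nonneg, hβ0] using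
    tree_matrix_sphere_sum_general (B := .of fun i j ↦ (β i * β j) • A i j)
      htree.isAcyclic (fun i j h ↦ hadj i j (right_ne_zero_of_smul (a := β i * β j) h))
      (fun i j ↦ (hzero i j).imp (by simp [·]) (by simp [·]))
end

section
/- Let A = [a_{ij}] ∈ Mₙ(ℍ) be strictly upper triangular (a_{ij} = 0 for i ≥ j) and a tree matrix. Then W(A) is a circular disk with center at the origin whose radius is the maximum of β ↦ ∑_{i,j=1}^n βᵢβⱼ|a_{ij}| over β ∈ S⁺_{ℝⁿ}; that is, W(A) = 𝔻_ℍ(0, max_{β ∈ S⁺_{ℝⁿ}} ∑_{i,j} βᵢβⱼ|a_{ij}|). -/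
/-!
The triangle inequality gives `‖x⋆Ax‖ ≤ ∑ᵢⱼ ‖xᵢ‖ ‖xⱼ‖ ‖aᵢⱼ‖ ≤ R`. Conversely, if `‖q‖ ≤ R`, write
`q = ‖q‖ u` and `aᵢⱼ = ‖aᵢⱼ‖ bᵢⱼ` with `u` and `bᵢⱼ` unit quaternions. The support of `A` is an
oriented forest, so the equations `sᵢ⁻¹ bᵢⱼ sⱼ = u` on its edges can be solved in unit quaternions,
by propagation along paths from a root of each component. Then `xᵢ = γᵢ sᵢ` satisfies
`x⋆Ax = (∑ᵢⱼ γᵢ γⱼ ‖aᵢⱼ‖) u`. As `γ` runs over the connected set `S⁺`, the coefficient of `u` takes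
every value between `0`, attained at a basis vector, and its maximum `R`; in particular it takes
the value `‖q‖`.
-/

open scoped Quaternion

section GainGraph

variable {V Γ : Type*} [Group Γ] {G : SimpleGraph V} {σ : V → V → Γ}

/-- The gain of a walk in a gain graph: the ordered product of the gains `σ v w` of its darts
`(v, w)`, in an arbitrary group. -/
def walkGain (σ : V → V → Γ) {v w : V} (p : G.Walk v w) : Γ :=
  (p.darts.map fun d ↦ σ d.fst d.snd).prod

theorem walkGain_concat {u v w : V} (p : G.Walk u v) (h : G.Adj v w) :
    walkGain σ (p.concat h) = walkGain σ p * σ v w := by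
  simp [walkGain, SimpleGraph.Walk.darts_concat]

theorem walkGain_copy {v w v' w' : V} (p : G.Walk v w) (hv : v = v') (hw : w = w') :
    walkGain σ (p.copy hv hw) = walkGain σ p := by
  simp [walkGain]

theorem walkGain_eq_mul_of_isPath (hG : G.IsAcyclic)
    (hσ : ∀ v w, G.Adj v w → σ w v = (σ v w)⁻¹) {u v w : V} {p : G.Walk u v} {q : G.Walk u w}
    (hp : p.IsPath) (hq : q.IsPath) (hvw : G.Adj v w) :
    walkGain σ q = walkGain σ p * σ v w := by
  by_cases hv : v ∈ q.support
  · rw [hG.path_concat hp hq hvw hv, walkGain_concat]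
  · have hw : w ∈ p.support := hG.mem_support_of_ne_mem_support_of_adj_of_isPath hp hq hvw hv
    rw [hG.path_concat hq hp hvw.symm hw, walkGain_concat, hσ v w hvw, inv_mul_cancel_right]

theorem exists_eq_inv_mul_of_isAcyclic (hG : G.IsAcyclic)
    (hσ : ∀ v w, G.Adj v w → σ w v = (σ v w)⁻¹) :
    ∃ g : V → Γ, ∀ v w, G.Adj v w → σ v w = (g v)⁻¹ * g w := by
  have hreach (v : V) : G.Reachable (G.connectedComponentMk v).out v :=
    SimpleGraph.ConnectedComponent.exact (Quot.out_eq _)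
  choose p hp using fun v ↦ (hreach v).exists_isPath
  refine ⟨fun v ↦ walkGain σ (p v), fun v w hvw ↦ eq_inv_mul_of_mul_eq ?_⟩
  have hroot : (G.connectedComponentMk w).out = (G.connectedComponentMk v).out := by
    rw [SimpleGraph.ConnectedComponent.connectedComponentMk_eq_of_adj hvw]
  have hq : ((p w).copy hroot rfl).IsPath := by simpa using hp w
  rw [← walkGain_eq_mul_of_isPath hG hσ (hp v) hq hvw, walkGain_copy]

variable {r : V → V → Prop}

theorem exists_eq_inv_mul_of_isAcyclic_fromRel (hr : ∀ v w, r v w → ¬ r w v)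
    (hacyclic : (SimpleGraph.fromRel r).IsAcyclic) (f : V → V → Γ) :
    ∃ g : V → Γ, ∀ v w, r v w → f v w = (g v)⁻¹ * g w := by
  classical
  let σ (v w : V) : Γ := if r v w then f v w else (f w v)⁻¹
  have hσ (v w : V) (hvw : (SimpleGraph.fromRel r).Adj v w) : σ w v = (σ v w)⁻¹ := by
    rcases hvw.2 with h | h <;> simp [σ, h, hr _ _ h]
  obtain ⟨g, hg⟩ := exists_eq_inv_mul_of_isAcyclic hacyclic hσ
  refine ⟨g, fun v w hvw ↦ ?_⟩
  have hne : v ≠ w := by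
    rintro rfl
    exact hr v v hvw hvw
  simpa [σ, hvw] using hg v w ⟨hne, Or.inl hvw⟩

theorem exists_inv_mul_mul_eq_of_isAcyclic_fromRel (hr : ∀ v w, r v w → ¬ r w v)
    (hacyclic : (SimpleGraph.fromRel r).IsAcyclic) (b : V → V → Γ) (u : Γ) :
    ∃ s : V → Γ, ∀ v w, r v w → (s v)⁻¹ * b v w * s w = u := by
  -- The condition reads `s v = b v w * s w * u⁻¹`, so moving `1` by a potential for the
  -- permutation-valued gains `x ↦ b v w * x * u⁻¹` solves it.
  let f (v w : V) : Equiv.Perm Γ := Equiv.mulLeft (b v w) * Equiv.mulRight u⁻¹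
  obtain ⟨g, hg⟩ := exists_eq_inv_mul_of_isAcyclic_fromRel hr hacyclic f
  refine ⟨fun v ↦ (g v)⁻¹ 1, fun v w hvw ↦ ?_⟩
  have hs : b v w * ((g w)⁻¹ 1 * u⁻¹) = (g v)⁻¹ 1 := by
    simpa [f] using congr($(hg v w hvw) ((g w)⁻¹ 1))
  dsimp only
  rw [← hs]
  group

end GainGraph

section NonnegUnitSphere

variable {ι : Type*} [Fintype ι]

variable (ι) in
/-- The nonnegative part `S⁺` of the Euclidean unit sphere, as a subset of `ι → ℝ`. It is cut out
by a sum of squares, since the norm of `ι → ℝ` is the sup norm. -/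
def nonnegUnitSphere : Set (ι → ℝ) :=
  {β | (∀ i, 0 ≤ β i) ∧ ∑ i, β i ^ 2 = 1}

theorem image_sqrt_stdSimplex :
    (fun (p : ι → ℝ) i ↦ √(p i)) '' stdSimplex ℝ ι = nonnegUnitSphere ι := by
  ext β
  constructor
  · rintro ⟨p, ⟨hp, hsum⟩, rfl⟩
    exact ⟨fun i ↦ Real.sqrt_nonneg _, by simpa only [Real.sq_sqrt (hp _)] using hsum⟩
  · rintro ⟨hβ, hsum⟩
    exact ⟨fun i ↦ β i ^ 2, ⟨fun i ↦ sq_nonneg _, hsum⟩, funext fun i ↦ Real.sqrt_sq (hβ i)⟩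

theorem isPreconnected_nonnegUnitSphere : IsPreconnected (nonnegUnitSphere ι) := by
  rw [← image_sqrt_stdSimplex]
  exact (convex_stdSimplex ℝ ι).isPreconnected.image _ (by fun_prop)

theorem single_mem_nonnegUnitSphere [DecidableEq ι] (i : ι) :
    Pi.single i 1 ∈ nonnegUnitSphere ι :=
  ⟨show (0 : ι → ℝ) ≤ Pi.single i 1 from Pi.single_nonneg.2 zero_le_one,
    by simp [Pi.single_apply, ite_pow]⟩

theorem nonempty_of_mem_nonnegUnitSphere {β : ι → ℝ} (hβ : β ∈ nonnegUnitSphere ι) :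
    Nonempty ι := by
  by_contra hι
  rw [not_nonempty_iff] at hι
  simpa using hβ.2

theorem exists_mem_nonnegUnitSphere_sum_eq {c : ι → ι → ℝ} (hc : ∀ i, c i i = 0) {β : ι → ℝ}
    (hβ : β ∈ nonnegUnitSphere ι) {t : ℝ} (ht : 0 ≤ t)
    (htβ : t ≤ ∑ i, ∑ j, β i * β j * c i j) :
    ∃ γ ∈ nonnegUnitSphere ι, ∑ i, ∑ j, γ i * γ j * c i j = t := by
  classical
  obtain ⟨k⟩ := nonempty_of_mem_nonnegUnitSphere hβ
  let F (γ : ι → ℝ) : ℝ := ∑ i, ∑ j, γ i * γ j * c i j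
  have hF : Continuous F := by fun_prop
  have hF_single : F (Pi.single k 1) = 0 := by simp [F, Pi.single_apply, hc]
  have hconn : IsPreconnected (F '' nonnegUnitSphere ι) :=
    isPreconnected_nonnegUnitSphere.image F hF.continuousOn
  exact hconn.Icc_subset ⟨_, single_mem_nonnegUnitSphere k, hF_single⟩ ⟨β, hβ, rfl⟩ ⟨ht, htβ⟩

end NonnegUnitSphere

section NumericalRange

theorem norm_sum_star_mul_mul_le {ι E : Type*} [Fintype ι] [NonUnitalSeminormedRing E]
    [StarRing E] [NormedStarGroup E] (A : Matrix ι ι E) (x : ι → E) :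
    ‖∑ i, ∑ j, star (x i) * A i j * x j‖ ≤ ∑ i, ∑ j, ‖x i‖ * ‖x j‖ * ‖A i j‖ := by
  refine norm_sum_le_of_le _ fun i _ ↦ norm_sum_le_of_le _ fun j _ ↦ ?_
  calc ‖star (x i) * A i j * x j‖ ≤ ‖star (x i)‖ * ‖A i j‖ * ‖x j‖ := norm_mul₃_le
    _ = ‖x i‖ * ‖x j‖ * ‖A i j‖ := by rw [norm_star, mul_right_comm]

theorem quaternion_mem_unitary_of_norm_eq_one {q : ℍ[ℝ]} (hq : ‖q‖ = 1) : q ∈ unitary ℍ[ℝ] := by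
  simp [Unitary.mem_iff, Quaternion.self_mul_star, Quaternion.star_mul_self,
    Quaternion.normSq_eq_norm_mul_self, hq]

theorem exists_unitary_eq_norm_smul (q : ℍ[ℝ]) : ∃ u : unitary ℍ[ℝ], q = ‖q‖ • (u : ℍ[ℝ]) := by
  rcases eq_or_ne q 0 with rfl | hq
  · exact ⟨1, by simp⟩
  · exact ⟨⟨_, quaternion_mem_unitary_of_norm_eq_one (NormedSpace.norm_normalize hq)⟩,
      (NormedSpace.norm_smul_normalize q).symm⟩

theorem exists_unitary_star_mul_mul_eq_norm_smul {ι : Type*} {A : Matrix ι ι ℍ[ℝ]}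
    (horient : ∀ i j, A i j ≠ 0 → A j i = 0)
    (hforest : (SimpleGraph.fromRel fun i j ↦ A i j ≠ 0).IsAcyclic) (u : unitary ℍ[ℝ]) :
    ∃ s : ι → unitary ℍ[ℝ],
      ∀ i j, star (s i : ℍ[ℝ]) * A i j * s j = ‖A i j‖ • (u : ℍ[ℝ]) := by
  choose b hb using fun i j ↦ exists_unitary_eq_norm_smul (A i j)
  obtain ⟨s, hs⟩ := exists_inv_mul_mul_eq_of_isAcyclic_fromRel
    (fun i j hij ↦ not_not.2 (horient i j hij)) hforest b u
  refine ⟨s, fun i j ↦ ?_⟩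
  rcases eq_or_ne (A i j) 0 with hij | hij
  · simp [hij]
  calc star (s i : ℍ[ℝ]) * A i j * s j
      = ‖A i j‖ • (star (s i : ℍ[ℝ]) * b i j * s j) := by
        conv_lhs => rw [hb i j]
        rw [mul_smul_comm, smul_mul_assoc]
    _ = ‖A i j‖ • (u : ℍ[ℝ]) := congr(‖A i j‖ • ($(hs i j hij) : ℍ[ℝ]))

variable {ι : Type*} [Fintype ι]

theorem sum_smul_mem_qnr {A : Matrix ι ι ℍ[ℝ]} {c : ι → ι → ℝ} {u : ℍ[ℝ]}
    {s : ι → unitary ℍ[ℝ]} (hs : ∀ i j, star (s i : ℍ[ℝ]) * A i j * s j = c i j • u)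
    {γ : ι → ℝ} (hγ : ∑ i, γ i ^ 2 = 1) :
    (∑ i, ∑ j, γ i * γ j * c i j) • u ∈ qnr A := by
  refine ⟨fun i ↦ γ i • (s i : ℍ[ℝ]), ?_, ?_⟩
  · simpa [norm_smul, CStarRing.norm_coe_unitary] using hγ
  · simp_rw [Finset.sum_smul, mul_smul, ← hs, Quaternion.star_smul, smul_mul_assoc, mul_smul_comm]

theorem tree_matrix_qnr_disk_general (A : Matrix ι ι ℍ[ℝ])
    (horient : ∀ i j, A i j ≠ 0 → A j i = 0)
    (hforest : (SimpleGraph.fromRel fun i j ↦ A i j ≠ 0).IsAcyclic) (R : ℝ)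
    (hR : IsGreatest {t | ∃ β : ι → ℝ, (∀ i, 0 ≤ β i) ∧ (∑ i, β i ^ 2) = 1 ∧
        t = ∑ i, ∑ j, β i * β j * ‖A i j‖} R) :
    qnr A = Metric.closedBall 0 R := by
  obtain ⟨⟨β, hβ, hβsum, rfl⟩, hub⟩ := hR
  refine Set.Subset.antisymm ?_ fun q hq ↦ ?_
  · rintro _ ⟨x, hx, rfl⟩
    rw [mem_closedBall_zero_iff]
    exact (norm_sum_star_mul_mul_le A x).trans
      (hub ⟨fun i ↦ ‖x i‖, fun i ↦ norm_nonneg _, hx, rfl⟩)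
  · have hdiag (i : ι) : ‖A i i‖ = 0 := norm_eq_zero.2 (by_contra fun h ↦ h (horient i i h))
    obtain ⟨γ, hγ, hγq⟩ := exists_mem_nonnegUnitSphere_sum_eq (c := fun i j ↦ ‖A i j‖) hdiag
      ⟨hβ, hβsum⟩ (norm_nonneg q) (mem_closedBall_zero_iff.1 hq)
    obtain ⟨u, hu⟩ := exists_unitary_eq_norm_smul q
    obtain ⟨s, hs⟩ := exists_unitary_star_mul_mul_eq_norm_smul horient hforest u
    rw [hu, ← hγq]
    exact sum_smul_mem_qnr hs hγ.2

end NumericalRange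

/-- If `A` is strictly upper triangular and a tree matrix, then `W(A)` is the
closed disk centered at the origin whose radius is the maximum of
`β ↦ ∑ᵢⱼ βᵢβⱼ|aᵢⱼ|` over `β ∈ S⁺_{ℝⁿ}`. -/
theorem tree_matrix_qnr_disk {n : ℕ} (A : Matrix (Fin n) (Fin n) (Quaternion ℝ))
    (hupper : ∀ i j, j ≤ i → A i j = 0)
    (htree : (graphOf A).IsTree)
    (R : ℝ)
    (hR : IsGreatest {t | ∃ β : Fin n → ℝ, (∀ i, 0 ≤ β i) ∧ (∑ i, β i ^ 2) = 1 ∧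
        t = ∑ i, ∑ j, β i * β j * ‖A i j‖} R) :
    qnr A = Metric.closedBall (0 : Quaternion ℝ) R :=
  tree_matrix_qnr_disk_general A (fun i j hij ↦ hupper j i (le_of_not_ge (mt (hupper i j) hij)))
    htree.isAcyclic R hR
end

section
/- Let A = [a_{ij}] ∈ Mₙ(ℍ) have real diagonal entries d₁,…,dₙ ∈ ℝ, and set d̲ = min{d₁,…,dₙ}, d̄ = max{d₁,…,dₙ}. Define, for d ∈ [d̲, d̄], r(d) = max{∑_{i≠j} βᵢβⱼ|a_{ij}| : β ∈ S⁺_{ℝⁿ}, ∑ᵢ dᵢβᵢ² = d}. Then the function r is continuous on the interval [d̲, d̄]. -/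
/-!
In the variables `pᵢ = βᵢ²` the constraint set is the slice of the standard simplex by the
hyperplane `∑ dᵢ pᵢ = c`, and the objective `∑_{i ≠ j} √pᵢ √pⱼ |aᵢⱼ|` is concave because geometric
means are. Maximising a concave function over the fibres of a linear map gives a concave function,
so `r` is concave, hence lower semicontinuous even at the ends of its interval. Compactness of the
simplex gives upper semicontinuity.
-/

open Set Filter Topology

section ConcaveOnReal

lemma exists_ge_Iic_mem_nhdsWithin {α : Type*} [TopologicalSpace α] [LinearOrder α]
    [ClosedIciTopology α] {s : Set α} {x : α} (hx : x ∈ s) :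
    ∃ b ∈ s, x ≤ b ∧ Iic b ∈ 𝓝[s] x := by
  by_cases h : ∃ b ∈ s, x < b
  · obtain ⟨b, hb, hxb⟩ := h
    exact ⟨b, hb, hxb.le, mem_nhdsWithin_of_mem_nhds (Iic_mem_nhds hxb)⟩
  · push Not at h
    exact ⟨x, hx, le_rfl, mem_of_superset self_mem_nhdsWithin h⟩

lemma exists_Icc_mem_nhdsWithin {α : Type*} [TopologicalSpace α] [LinearOrder α]
    [OrderClosedTopology α] {s : Set α} {x : α} (hx : x ∈ s) :
    ∃ a ∈ s, ∃ b ∈ s, x ∈ Icc a b ∧ Icc a b ∈ 𝓝[s] x := by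
  obtain ⟨b, hb, hxb, hIic⟩ := exists_ge_Iic_mem_nhdsWithin hx
  obtain ⟨a, ha, hax, hIci⟩ : ∃ a ∈ s, a ≤ x ∧ Ici a ∈ 𝓝[s] x :=
    exists_ge_Iic_mem_nhdsWithin (α := αᵒᵈ) hx
  exact ⟨a, ha, b, hb, ⟨hax, hxb⟩, inter_mem hIci hIic⟩

variable {s : Set ℝ} {f : ℝ → ℝ}

lemma lowerSemicontinuousWithinAt_uIcc_of_concaveOn {x z : ℝ} (hf : ConcaveOn ℝ s f) (hx : x ∈ s)
    (hz : z ∈ s) : LowerSemicontinuousWithinAt f (uIcc x z) x := by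
  -- When `z = x`, division by zero makes `t` vanish and the chord is the constant `f x`.
  set t : ℝ → ℝ := fun y => (y - x) / (z - x)
  have chord_le : ∀ y ∈ uIcc x z, (1 - t y) * f x + t y * f z ≤ f y := by
    rw [← segment_eq_uIcc]
    rintro _ ⟨a, b, ha, hb, hab, rfl⟩
    obtain rfl : a = 1 - b := eq_sub_of_add_eq hab
    rcases eq_or_ne x z with rfl | hxz
    · simp [t, ← add_mul]
    · have ht : t ((1 - b) • x + b • z) = b := by
        have : z - x ≠ 0 := sub_ne_zero.2 hxz.symm
        simp only [t, smul_eq_mul]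
        field_simp
        ring
      rw [ht]
      exact hf.2 hx hz ha hb hab
  have chord_tendsto : Tendsto (fun y => (1 - t y) * f x + t y * f z) (𝓝 x) (𝓝 (f x)) := by
    have : Continuous fun y => (1 - t y) * f x + t y * f z := by fun_prop
    simpa [t] using this.tendsto x
  intro y hy
  filter_upwards [self_mem_nhdsWithin, nhdsWithin_le_nhds (chord_tendsto.eventually_const_lt hy)]
    with w hw hyw
  exact hyw.trans_le (chord_le w hw)

lemma lowerSemicontinuousOn_of_concaveOn (hf : ConcaveOn ℝ s f) : LowerSemicontinuousOn f s := by
  intro x hx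
  obtain ⟨a, ha, b, hb, hxab, hIcc⟩ := exists_Icc_mem_nhdsWithin hx
  intro y hy
  have hleft := lowerSemicontinuousWithinAt_uIcc_of_concaveOn hf hx ha y hy
  have hright := lowerSemicontinuousWithinAt_uIcc_of_concaveOn hf hx hb y hy
  rw [uIcc_of_ge hxab.1] at hleft
  rw [uIcc_of_le hxab.2] at hright
  refine nhdsWithin_le_of_mem hIcc ?_
  rw [← Icc_union_Icc_eq_Icc hxab.1 hxab.2, nhdsWithin_union]
  exact ⟨hleft, hright⟩

end ConcaveOnReal

section FibrewiseMaximum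

lemma upperSemicontinuousOn_of_isGreatest_fiber {X Y γ : Type*} [TopologicalSpace X]
    [TopologicalSpace Y] [T2Space Y] [LinearOrder γ] {K : Set X} {F : X → γ} {φ : X → Y}
    {s : Set Y} {r : Y → γ} (hK : IsCompact K) (hF : UpperSemicontinuousOn F K)
    (hφ : ContinuousOn φ K) (hr : ∀ c ∈ s, IsGreatest (F '' (K ∩ φ ⁻¹' {c})) (r c)) :
    UpperSemicontinuousOn r s := by
  intro c₀ hc₀ y hy
  have superlevel_closed : IsClosed (φ '' (K ∩ F ⁻¹' Ici y)) :=
    ((hF.isCompact_inter_preimage_Ici hK y).image_of_continuousOn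
      (hφ.mono inter_subset_left)).isClosed
  have hc₀_notMem : c₀ ∉ φ '' (K ∩ F ⁻¹' Ici y) := by
    rintro ⟨p, ⟨hpK, hyp⟩, hpc⟩
    exact (hyp.trans ((hr c₀ hc₀).2 ⟨p, ⟨hpK, hpc⟩, rfl⟩)).not_gt hy
  filter_upwards [nhdsWithin_le_nhds (superlevel_closed.isOpen_compl.mem_nhds hc₀_notMem),
    self_mem_nhdsWithin] with c hc hcs
  obtain ⟨p, ⟨hpK, hpc⟩, hpr⟩ := (hr c hcs).1
  by_contra! hyr
  exact hc ⟨p, ⟨hpK, hyr.trans_eq hpr.symm⟩, hpc⟩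

lemma concaveOn_of_isGreatest_fiber {𝕜 E G γ : Type*} [Semiring 𝕜] [PartialOrder 𝕜]
    [AddCommMonoid E] [AddCommMonoid G] [AddCommMonoid γ] [PartialOrder γ] [Module 𝕜 E]
    [Module 𝕜 G] [SMul 𝕜 γ] {K : Set E} {F : E → γ} {φ : E →ₗ[𝕜] G} {s : Set G} {r : G → γ}
    (hF : ConcaveOn 𝕜 K F) (hs : Convex 𝕜 s)
    (hr : ∀ c ∈ s, IsGreatest (F '' (K ∩ φ ⁻¹' {c})) (r c)) : ConcaveOn 𝕜 s r := by
  refine ⟨hs, fun c hc c' hc' a b ha hb hab => ?_⟩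
  obtain ⟨p, ⟨hpK, rfl⟩, hp⟩ := (hr c hc).1
  obtain ⟨q, ⟨hqK, rfl⟩, hq⟩ := (hr c' hc').1
  rw [← hp, ← hq]
  refine (hF.2 hpK hqK ha hb hab).trans ((hr _ (hs hc hc' ha hb hab)).2 ⟨_, ⟨?_, ?_⟩, rfl⟩)
  · exact hF.1 hpK hqK ha hb hab
  · simp

lemma continuousOn_of_isGreatest_fiber {E : Type*} [AddCommMonoid E] [Module ℝ E]
    [TopologicalSpace E] {K : Set E} {F : E → ℝ} {φ : E →L[ℝ] ℝ} {s : Set ℝ} {r : ℝ → ℝ}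
    (hK : IsCompact K) (hF : UpperSemicontinuousOn F K) (hFconcave : ConcaveOn ℝ K F)
    (hs : Convex ℝ s) (hr : ∀ c ∈ s, IsGreatest (F '' (K ∩ φ ⁻¹' {c})) (r c)) :
    ContinuousOn r s :=
  continuousOn_iff_lower_upperSemicontinuousOn.2
    ⟨lowerSemicontinuousOn_of_concaveOn
      (concaveOn_of_isGreatest_fiber (φ := φ.toLinearMap) hFconcave hs hr),
    upperSemicontinuousOn_of_isGreatest_fiber hK hF φ.continuous.continuousOn hr⟩

end FibrewiseMaximum

lemma concaveOn_sqrt_mul_sqrt :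
    ConcaveOn ℝ (Ici (0 : ℝ × ℝ)) (fun p => √p.1 * √p.2) := by
  refine ⟨convex_Ici 0, fun p ⟨(hp₁ : 0 ≤ p.1), (hp₂ : 0 ≤ p.2)⟩ q
    ⟨(hq₁ : 0 ≤ q.1), (hq₂ : 0 ≤ q.2)⟩ a b ha hb _ => ?_⟩
  have cauchy_schwarz := Real.sum_sqrt_mul_sqrt_le (f := ![a * p.1, b * q.1])
    (g := ![a * p.2, b * q.2]) Finset.univ
    (Fin.forall_fin_two.2 ⟨mul_nonneg ha hp₁, mul_nonneg hb hq₁⟩)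
    (Fin.forall_fin_two.2 ⟨mul_nonneg ha hp₂, mul_nonneg hb hq₂⟩)
  have sqrt_homogeneous : ∀ {c x y : ℝ}, 0 ≤ c → √(c * x) * √(c * y) = c * (√x * √y) := by
    intro c x y hc
    rw [Real.sqrt_mul hc, Real.sqrt_mul hc, mul_mul_mul_comm, Real.mul_self_sqrt hc]
  simpa [sqrt_homogeneous ha, sqrt_homogeneous hb] using cauchy_schwarz

lemma concaveOn_sum {𝕜 E γ κ : Type*} [Semiring 𝕜] [PartialOrder 𝕜] [AddCommMonoid E]
    [AddCommMonoid γ] [PartialOrder γ] [IsOrderedAddMonoid γ] [SMul 𝕜 E] [Module 𝕜 γ]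
    {K : Set E} {t : Finset κ} {f : κ → E → γ} (hK : Convex 𝕜 K)
    (hf : ∀ i ∈ t, ConcaveOn 𝕜 K (f i)) : ConcaveOn 𝕜 K (fun p => ∑ i ∈ t, f i p) := by
  refine ⟨hK, fun p hp q hq a b ha hb hab => ?_⟩
  simp only [Finset.smul_sum, ← Finset.sum_add_distrib]
  exact Finset.sum_le_sum fun i hi => (hf i hi).2 hp hq ha hb hab

section OffDiagSqrtForm

variable {ι : Type*} [Fintype ι] [DecidableEq ι]

/-- The off-diagonal form `∑_{i ≠ j} βᵢ βⱼ wᵢⱼ` in the variables `pᵢ = βᵢ²`. -/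
noncomputable def offDiagSqrtForm (w : ι → ι → ℝ) (p : ι → ℝ) : ℝ :=
  ∑ i, ∑ j with j ≠ i, √(p i) * √(p j) * w i j

lemma continuous_offDiagSqrtForm (w : ι → ι → ℝ) : Continuous (offDiagSqrtForm w) := by
  unfold offDiagSqrtForm
  fun_prop

lemma concaveOn_offDiagSqrtForm {w : ι → ι → ℝ} (hw : ∀ i j, j ≠ i → 0 ≤ w i j) :
    ConcaveOn ℝ (Ici 0) (offDiagSqrtForm w) := by
  refine concaveOn_sum (convex_Ici 0) fun i _ =>
    concaveOn_sum (convex_Ici 0) fun j hj => ?_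
  have geomMean_concave : ConcaveOn ℝ (Ici 0) fun p : ι → ℝ => √(p i) * √(p j) :=
    (concaveOn_sqrt_mul_sqrt.comp_linearMap
      (.prod (.proj (φ := fun _ => ℝ) i) (.proj j))).subset (fun _ hp => ⟨hp i, hp j⟩)
      (convex_Ici 0)
  simpa only [smul_eq_mul, mul_comm] using
    geomMean_concave.smul (hw i j (Finset.mem_filter.1 hj).2)

lemma setOf_offDiag_eq_image_stdSimplex (w : ι → ι → ℝ) (d : ι → ℝ) (c : ℝ) :
    {t | ∃ β : ι → ℝ, (∀ i, 0 ≤ β i) ∧ (∑ i, β i ^ 2) = 1 ∧ (∑ i, d i * β i ^ 2) = c ∧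
      t = ∑ i, ∑ j ∈ Finset.univ.filter (fun j => j ≠ i), β i * β j * w i j} =
      offDiagSqrtForm w '' (stdSimplex ℝ ι ∩ Fintype.linearCombination ℝ d ⁻¹' {c}) := by
  ext t
  constructor
  · rintro ⟨β, hβ, hnorm, hc, rfl⟩
    refine ⟨fun i => β i ^ 2, ⟨⟨fun i => sq_nonneg _, hnorm⟩, ?_⟩, ?_⟩
    · simpa [Fintype.linearCombination_apply, mul_comm] using hc
    · simp only [offDiagSqrtForm, Real.sqrt_sq (hβ _)]
  · rintro ⟨p, ⟨⟨hp, hsum⟩, hc⟩, rfl⟩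
    refine ⟨fun i => √(p i), fun i => Real.sqrt_nonneg _, ?_, ?_, rfl⟩
    · simpa only [Real.sq_sqrt (hp _)] using hsum
    · simpa [Real.sq_sqrt (hp _), Fintype.linearCombination_apply, mul_comm] using hc

theorem radius_function_continuous_general {w : ι → ι → ℝ} (hw : ∀ i j, j ≠ i → 0 ≤ w i j)
    (d : ι → ℝ) {s : Set ℝ} (hs : Convex ℝ s) (r : ℝ → ℝ)
    (hr : ∀ c ∈ s,
      IsGreatest {t | ∃ β : ι → ℝ, (∀ i, 0 ≤ β i) ∧ (∑ i, β i ^ 2) = 1 ∧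
        (∑ i, d i * β i ^ 2) = c ∧
        t = ∑ i, ∑ j ∈ Finset.univ.filter (fun j => j ≠ i), β i * β j * w i j} (r c)) :
    ContinuousOn r s := by
  simp only [setOf_offDiag_eq_image_stdSimplex] at hr
  exact continuousOn_of_isGreatest_fiber
    (φ := LinearMap.toContinuousLinearMap (Fintype.linearCombination ℝ d))
    (isCompact_stdSimplex ℝ ι)
    (continuous_offDiagSqrtForm w).continuousOn.upperSemicontinuousOn
    ((concaveOn_offDiagSqrtForm hw).subset (fun p hp => hp.1) (convex_stdSimplex ℝ ι)) hs hr

end OffDiagSqrtForm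

/-- For a quaternionic matrix `A` with real diagonal entries `d₁, …, dₙ`, the
function `r(d) = max{∑_{i≠j} βᵢβⱼ|aᵢⱼ| : β ∈ S⁺_{ℝⁿ}, ∑ᵢ dᵢβᵢ² = d}` is continuous on
`[d̲, d̄]`, where `d̲` and `d̄` are the smallest and largest diagonal entries. -/
theorem radius_function_continuous {n : ℕ} (hn : 0 < n)
    (A : Matrix (Fin n) (Fin n) (Quaternion ℝ))
    (d : Fin n → ℝ) (hdiag : ∀ i, A i i = (d i : Quaternion ℝ))
    (dmin dmax : ℝ)
    (hmin : IsLeast (Set.range d) dmin) (hmax : IsGreatest (Set.range d) dmax)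
    (r : ℝ → ℝ)
    (hr : ∀ c ∈ Set.Icc dmin dmax,
      IsGreatest {t | ∃ β : Fin n → ℝ, (∀ i, 0 ≤ β i) ∧ (∑ i, β i ^ 2) = 1 ∧
        (∑ i, d i * β i ^ 2) = c ∧
        t = ∑ i, ∑ j ∈ Finset.univ.filter (fun j => j ≠ i), β i * β j * ‖A i j‖} (r c)) :
    ContinuousOn r (Set.Icc dmin dmax) :=
  radius_function_continuous_general (fun i j _ => norm_nonneg (A i j)) d (convex_Icc dmin dmax) r
    hr
end

section
/- Let A ∈ M₃(ℍ) be strictly upper triangular with entries a₁₂, a₁₃, a₂₃ above the diagonal, and suppose the two quaternions a₁₂ and a₁₃a₂₃* are ℝ-linearly independent. Let y = (y₁,y₂,y₃) ∈ ℍ³ with |y₁|²+|y₂|²+|y₃|² = 1 be such that π_ℝ(y⋆Ay) ≥ π_ℝ(x⋆Ax) for all x ∈ ℍ³ with ∑ᵢ|xᵢ|² = 1. Then each of the three quaternions y₁*(a₁₂y₂ + a₁₃y₃), y₂*(a₁₂*y₁ + a₂₃y₃), and (y₁*a₁₃ + y₂*a₂₃)y₃ is a nonzero real number. -/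
/-!
The maximizer `y` is an eigenvector, with eigenvalue `μ > 0`, of the Hermitian matrix
`H = A + Aᴴ`, so `yᵢ* (H y)ᵢ = μ |yᵢ|²` is real and only `yᵢ ≠ 0` remains to be shown.
If `yᵢ = 0` and `j`, `k` are the other two indices, then rows `i` and `j` of `H y = μ y` give
`(Hᵢⱼ Hⱼₖ + μ Hᵢₖ) yₖ = 0`, so that `Hᵢⱼ Hⱼₖ Hₖᵢ = -μ |Hᵢₖ|²` is real. Being real is invariant
under cyclic rotation of this product, and `H₁₂ H₂₃ H₃₁ = a₁₂ (a₁₃ a₂₃*)*` is real only if `a₁₂`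
and `a₁₃ a₂₃*` are `ℝ`-linearly dependent.
-/

open Matrix
open scoped Quaternion RealInnerProductSpace

section Quaternion

theorem quaternion_eq_coe_re_of_im_eq_zero {q : ℍ} (hq : q.im = 0) : q = (q.re : ℍ) := by
  simpa only [hq, add_zero] using q.re_add_im.symm

theorem quaternion_re_mul_comm (p q : ℍ) : (p * q).re = (q * p).re := by
  simp only [Quaternion.re_mul]
  ring

theorem quaternion_im_mul_eq_zero_comm {p q : ℍ} :
    (p * q).im = 0 ↔ (q * p).im = 0 := by
  suffices himp : ∀ p q : ℍ, (p * q).im = 0 → (q * p).im = 0 from ⟨himp p q, himp q p⟩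
  intro p q h
  rcases eq_or_ne p 0 with rfl | hp
  · simp
  have hreal := quaternion_eq_coe_re_of_im_eq_zero h
  have hqp : q * p = ((p * q).re : ℍ) := by
    apply mul_left_cancel₀ hp
    rw [← mul_assoc, ← Quaternion.coe_commutes, ← hreal]
  rw [hqp, Quaternion.im_coe]

theorem quaternion_im_mul_star_ne_zero {p q : ℍ} (h : LinearIndependent ℝ ![p, q]) :
    (p * star q).im ≠ 0 := by
  intro him
  have hdep : Quaternion.normSq q • p + (-(p * star q).re) • q = 0 := by
    rw [neg_smul, ← Quaternion.coe_mul_eq_smul (p * star q).re,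
      ← quaternion_eq_coe_re_of_im_eq_zero him, mul_assoc, Quaternion.star_mul_self,
      Quaternion.mul_coe_eq_smul, add_neg_cancel]
  exact h.ne_zero 1 (Quaternion.normSq_eq_zero.1 (LinearIndependent.pair_iff.1 h _ _ hdep).1)

end Quaternion

theorem exists_pos_hasEigenvector_of_isMaxOn_sphere {F : Type*} [NormedAddCommGroup F]
    [InnerProductSpace ℝ F] [CompleteSpace F] {T : F →L[ℝ] F} (hT : IsSelfAdjoint T) {y w : F}
    (hy : y ≠ 0) (hmax : IsMaxOn T.reApplyInnerSelf (Metric.sphere 0 ‖y‖) y)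
    (hw : 0 < T.reApplyInnerSelf w) :
    ∃ μ > 0, Module.End.HasEigenvector (T : F →ₗ[ℝ] F) μ y := by
  refine ⟨_, ?_, hT.hasEigenvector_of_isMaxOn hy hmax⟩
  have hw0 : w ≠ 0 := by
    rintro rfl
    simp [ContinuousLinearMap.reApplyInnerSelf_apply] at hw
  have hbdd : BddAbove (Set.range fun x : {x : F // x ≠ 0} ↦ T.rayleighQuotient x) :=
    ⟨‖T‖, Set.forall_mem_range.2 fun x ↦ (abs_le.1 (T.rayleighQuotient_le_norm x)).2⟩
  calc 0 < T.rayleighQuotient w := by positivity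
    _ ≤ ⨆ x : {x : F // x ≠ 0}, T.rayleighQuotient x := le_ciSup hbdd ⟨w, hw0⟩

section QuaternionicMatrix

variable {n : Type*} [Fintype n]

/-- The quadratic form `x ↦ π_ℝ(x⋆Ax)` of a quaternionic matrix `A`. -/
noncomputable def reForm (A : Matrix n n ℍ) (x : n → ℍ) : ℝ :=
  (star x ⬝ᵥ A *ᵥ x).re

theorem reForm_eq_re_sum (A : Matrix n n ℍ) (x : n → ℍ) :
    reForm A x = (∑ i, ∑ j, star (x i) * A i j * x j).re := by
  simp only [reForm, dotProduct, mulVec, Pi.star_apply, Finset.mul_sum, mul_assoc]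

theorem reForm_add_conjTranspose (A : Matrix n n ℍ) (x : n → ℍ) :
    reForm (A + Aᴴ) x = 2 * reForm A x := by
  have hadj : star x ⬝ᵥ Aᴴ *ᵥ x = star (star x ⬝ᵥ A *ᵥ x) := by
    rw [dotProduct_mulVec, ← star_mulVec, ← star_dotProduct_star, star_star]
  rw [reForm, add_mulVec, dotProduct_add, hadj, Quaternion.re_add, Quaternion.re_star, reForm,
    two_mul]

theorem exists_reForm_pos {H : Matrix n n ℍ} (hH : H.IsHermitian) {i j : n}
    (hii : H i i = 0) (hjj : H j j = 0) (hij : H i j ≠ 0) : ∃ w, 0 < reForm H w := by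
  classical
  refine ⟨Pi.single i (H i j) + Pi.single j 1, ?_⟩
  have hform : reForm H (Pi.single i (H i j) + Pi.single j 1) = 2 * Quaternion.normSq (H i j) := by
    simp [reForm, mulVec_add, add_dotProduct, dotProduct_add, Pi.star_single, hii, hjj,
      ← hH.apply j i, Quaternion.star_mul_self, two_mul]
  rw [hform]
  have := Quaternion.normSq_nonneg.lt_of_ne' (Quaternion.normSq_ne_zero.2 hij)
  positivity

/-- The `ℝ`-linear operator `x ↦ A x` on the real Hilbert space `ℍⁿ`. It is only considered over
`ℝ` since left multiplication by a matrix does not commute with left scalar multiplication. -/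
noncomputable def quaternionicOperator (A : Matrix n n ℍ) :
    EuclideanSpace ℍ n →L[ℝ] EuclideanSpace ℍ n :=
  LinearMap.toContinuousLinearMap ((WithLp.linearEquiv 2 ℝ (n → ℍ)).symm.conj (mulVecBilin ℝ ℝ A))

@[simp]
theorem ofLp_quaternionicOperator (A : Matrix n n ℍ) (x : EuclideanSpace ℍ n) :
    (quaternionicOperator A x).ofLp = A *ᵥ x.ofLp :=
  rfl

theorem real_inner_eq_re_star_dotProduct (x y : EuclideanSpace ℍ n) :
    ⟪x, y⟫ = (star x.ofLp ⬝ᵥ y.ofLp).re := by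
  rw [real_inner_comm]
  simp only [PiLp.inner_apply, Quaternion.inner_def, dotProduct, Pi.star_apply,
    quaternion_re_mul_comm (y.ofLp _)]
  exact (map_sum (QuaternionAlgebra.reₗ (-1) 0 (-1) : ℍ →ₗ[ℝ] ℝ)
    (fun i ↦ star (x.ofLp i) * y.ofLp i) Finset.univ).symm

theorem reApplyInnerSelf_quaternionicOperator (A : Matrix n n ℍ) (x : EuclideanSpace ℍ n) :
    (quaternionicOperator A).reApplyInnerSelf x = reForm A x.ofLp := by
  rw [ContinuousLinearMap.reApplyInnerSelf_apply, real_inner_comm, RCLike.re_to_real,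
    real_inner_eq_re_star_dotProduct, ofLp_quaternionicOperator, reForm]

theorem isSelfAdjoint_quaternionicOperator {H : Matrix n n ℍ} (hH : H.IsHermitian) :
    IsSelfAdjoint (quaternionicOperator H) := by
  rw [ContinuousLinearMap.isSelfAdjoint_iff_isSymmetric]
  intro x y
  simp only [ContinuousLinearMap.coe_coe, real_inner_eq_re_star_dotProduct,
    ofLp_quaternionicOperator, star_mulVec, hH.eq, dotProduct_mulVec]

theorem exists_pos_mulVec_eq_smul_of_reForm_max {H : Matrix n n ℍ} (hH : H.IsHermitian)
    {y w : n → ℍ} (hy : ∑ i, ‖y i‖ ^ 2 = 1)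
    (hmax : ∀ x : n → ℍ, ∑ i, ‖x i‖ ^ 2 = 1 → reForm H x ≤ reForm H y)
    (hw : 0 < reForm H w) : ∃ μ : ℝ, 0 < μ ∧ H *ᵥ y = μ • y := by
  have norm_eq_one_iff (x : EuclideanSpace ℍ n) : ‖x‖ = 1 ↔ ∑ i, ‖x i‖ ^ 2 = 1 := by
    rw [← PiLp.norm_sq_eq_of_L2, pow_eq_one_iff_of_nonneg (norm_nonneg x) two_ne_zero]
  have hnorm : ‖WithLp.toLp 2 y‖ = 1 := (norm_eq_one_iff _).2 hy
  obtain ⟨μ, hμ, heig⟩ := exists_pos_hasEigenvector_of_isMaxOn_sphere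
    (isSelfAdjoint_quaternionicOperator hH) (y := WithLp.toLp 2 y) (w := WithLp.toLp 2 w)
    (norm_ne_zero_iff.1 (hnorm ▸ one_ne_zero))
    (fun x hx ↦ by
      rw [hnorm, mem_sphere_zero_iff_norm, norm_eq_one_iff] at hx
      simpa only [Set.mem_ofPred_eq, reApplyInnerSelf_quaternionicOperator] using hmax x hx)
    (by rwa [reApplyInnerSelf_quaternionicOperator])
  exact ⟨μ, hμ, congrArg WithLp.ofLp heig.apply_eq_smul⟩

theorem im_mul_mul_eq_zero_of_eigenvector_supported_on_pair {H : Matrix n n ℍ}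
    (hH : H.IsHermitian) {μ : ℝ} (hμ : μ ≠ 0) {y : n → ℍ} (hy : y ≠ 0) (heig : H *ᵥ y = μ • y)
    {i j k : n} (hjj : H j j = 0) (hjk : j ≠ k) (hi : y i = 0)
    (hsupp : ∀ l, l ≠ j ∧ l ≠ k → y l = 0) : (H i j * H j k * H k i).im = 0 := by
  have row (l : n) : H l j * y j + H l k * y k = μ • y l := by
    rw [← Pi.smul_apply, ← heig]
    refine (Fintype.sum_eq_add (f := fun m ↦ H l m * y m) j k hjk fun m hm ↦ ?_).symm
    rw [hsupp m hm, mul_zero]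
  have row_i : H i j * y j + H i k * y k = 0 := by rw [row, hi, smul_zero]
  have row_j : H j k * y k = μ • y j := by rw [← row, hjj, zero_mul, zero_add]
  have hyk : y k ≠ 0 := by
    intro hk
    have hyj : y j = 0 := by simpa [hk, hμ] using row_j.symm
    exact hy (funext fun l ↦ by by_cases hlj : l = j <;> by_cases hlk : l = k <;> simp_all)
  have hprod : H i j * H j k + μ • H i k = 0 := by
    apply (mul_eq_zero.1 _).resolve_right hyk
    calc (H i j * H j k + μ • H i k) * y k
        = H i j * (H j k * y k) + μ • (H i k * y k) := by rw [add_mul, mul_assoc, smul_mul_assoc]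
      _ = μ • (H i j * y j + H i k * y k) := by rw [row_j, mul_smul_comm, smul_add]
      _ = 0 := by rw [row_i, smul_zero]
  rw [eq_neg_of_add_eq_zero_left hprod, ← hH.apply k i, neg_mul, smul_mul_assoc,
    Quaternion.self_mul_star, Quaternion.im_neg, Quaternion.im_smul, Quaternion.im_coe, smul_zero,
    neg_zero]

theorem eigenvector_apply_ne_zero_of_im_ne_zero {H : Matrix (Fin 3) (Fin 3) ℍ}
    (hH : H.IsHermitian) (hdiag : ∀ i, H i i = 0) (hcycle : (H 0 1 * H 1 2 * H 2 0).im ≠ 0)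
    {μ : ℝ} (hμ : μ ≠ 0) {y : Fin 3 → ℍ} (hy : y ≠ 0) (heig : H *ᵥ y = μ • y) (i : Fin 3) :
    y i ≠ 0 := by
  intro hi
  have himag (j k : Fin 3) (hjk : j ≠ k) (hothers : ∀ l, l ≠ j ∧ l ≠ k → l = i) :
      (H i j * H j k * H k i).im = 0 :=
    im_mul_mul_eq_zero_of_eigenvector_supported_on_pair hH hμ hy heig (hdiag j) hjk hi
      fun l hl ↦ hothers l hl ▸ hi
  apply hcycle
  match i with
  | 0 => exact himag 1 2 (by decide) (by decide)
  | 1 =>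
    rw [mul_assoc]
    exact quaternion_im_mul_eq_zero_comm.1 (himag 2 0 (by decide) (by decide))
  | 2 =>
    rw [quaternion_im_mul_eq_zero_comm, ← mul_assoc]
    exact himag 0 1 (by decide) (by decide)

theorem im_star_mul_mulVec_eq_zero_and_ne_zero_of_eigenvector {H : Matrix n n ℍ} {μ : ℝ}
    (hμ : μ ≠ 0) {y : n → ℍ} (heig : H *ᵥ y = μ • y) {i : n} (hyi : y i ≠ 0) :
    (star (y i) * (H *ᵥ y) i).im = 0 ∧ star (y i) * (H *ᵥ y) i ≠ 0 := by
  rw [heig, Pi.smul_apply]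
  refine ⟨?_, mul_ne_zero (star_ne_zero.2 hyi) (smul_ne_zero hμ hyi)⟩
  rw [mul_smul_comm, Quaternion.star_mul_self, Quaternion.im_smul, Quaternion.im_coe, smul_zero]

end QuaternionicMatrix

/-- Let `A ∈ M₃(ℍ)` be strictly upper triangular with `a₁₂` and `a₁₃a₂₃*`
`ℝ`-linearly independent, and let `y` be a unit vector maximizing the real part of
`x⋆Ax` over unit vectors `x`. Then `y₁*(a₁₂y₂ + a₁₃y₃)`, `y₂*(a₁₂*y₁ + a₂₃y₃)` and
`(y₁*a₁₃ + y₂*a₂₃)y₃` are all nonzero reals. -/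
theorem maximizer_terms_real_nonzero (A : Matrix (Fin 3) (Fin 3) (Quaternion ℝ))
    (hupper : ∀ i j, j ≤ i → A i j = 0)
    (hli : LinearIndependent ℝ ![A 0 1, A 0 2 * star (A 1 2)])
    (y : Fin 3 → Quaternion ℝ) (hy : (∑ i, ‖y i‖ ^ 2) = 1)
    (hmax : ∀ x : Fin 3 → Quaternion ℝ, (∑ i, ‖x i‖ ^ 2) = 1 →
      (∑ i, ∑ j, star (x i) * A i j * x j).re ≤ (∑ i, ∑ j, star (y i) * A i j * y j).re) :
    ((star (y 0) * (A 0 1 * y 1 + A 0 2 * y 2)).im = 0 ∧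
      star (y 0) * (A 0 1 * y 1 + A 0 2 * y 2) ≠ 0) ∧
    ((star (y 1) * (star (A 0 1) * y 0 + A 1 2 * y 2)).im = 0 ∧
      star (y 1) * (star (A 0 1) * y 0 + A 1 2 * y 2) ≠ 0) ∧
    (((star (y 0) * A 0 2 + star (y 1) * A 1 2) * y 2).im = 0 ∧
      (star (y 0) * A 0 2 + star (y 1) * A 1 2) * y 2 ≠ 0) := by
  have hH : (A + Aᴴ).IsHermitian := isHermitian_add_transpose_self A
  have hdiag (i) : (A + Aᴴ) i i = 0 := by simp [hupper i i le_rfl]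
  have h01 : (A + Aᴴ) 0 1 = A 0 1 := by simp [hupper 1 0]
  have hcycle : ((A + Aᴴ) 0 1 * (A + Aᴴ) 1 2 * (A + Aᴴ) 2 0).im ≠ 0 := by
    simpa [hupper, mul_assoc] using quaternion_im_mul_star_ne_zero hli
  obtain ⟨w, hw⟩ := exists_reForm_pos hH (hdiag 0) (hdiag 1) (h01 ▸ hli.ne_zero 0)
  obtain ⟨μ, hμ, heig⟩ := exists_pos_mulVec_eq_smul_of_reForm_max hH hy
    (fun x hx ↦ by simpa [reForm_add_conjTranspose, reForm_eq_re_sum A] using hmax x hx) hw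
  have hy0 : y ≠ 0 := by
    rintro rfl
    simp at hy
  have hterm (i) := im_star_mul_mulVec_eq_zero_and_ne_zero_of_eigenvector hμ.ne' heig
    (eigenvector_apply_ne_zero_of_im_ne_zero hH hdiag hcycle hμ.ne' hy0 heig i)
  have hthird : (star (y 0) * A 0 2 + star (y 1) * A 1 2) * y 2 =
      star (star (y 2) * ((A + Aᴴ) *ᵥ y) 2) := by
    simp [mulVec, dotProduct, Fin.sum_univ_three, hupper]
  refine ⟨?_, ?_, ?_⟩
  · simpa [mulVec, dotProduct, Fin.sum_univ_three, hupper] using hterm 0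
  · simpa [mulVec, dotProduct, Fin.sum_univ_three, hupper] using hterm 1
  · rw [hthird, Quaternion.im_star, neg_eq_zero, star_ne_zero]
    exact hterm 2
end

section
/- Let A ∈ M₃(ℍ) be strictly upper triangular with entries a₁₂, a₁₃, a₂₃ above the diagonal, and suppose a₁₃* a₁₂ a₂₃ is a nonzero real number. Then A is unitarily equivalent to a real matrix: there exists a unitary matrix U ∈ M₃(ℍ) (U*U = I) such that every entry of U*AU lies in ℝ ⊆ ℍ. Moreover U can be taken diagonal, U = diag(ρ, z₁₂*ρ, z₁₃*ρ), where ρ is any unit quaternion and z_{ij} are unit quaternions with a_{ij} = |a_{ij}| z_{ij}. -/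
open Matrix

/-! Conjugating `A` by `diag(z₁* ρ, …, zₙ* ρ)` turns the entry `aᵢⱼ` into `ρ* (zᵢ aᵢⱼ zⱼ*) ρ`. If
`zᵢ` is the phase of the entry `aₒᵢ` of a fixed row `o`, this makes row `o` real. Any other entry
becomes real once `zᵢ aᵢⱼ zⱼ*` is real, and since quaternions with real product commute, this
amounts to `zⱼ* zᵢ aᵢⱼ`, a real multiple of `aₒⱼ* aₒᵢ aᵢⱼ`, being real. -/

open scoped Quaternion

section RealProducts

variable {R : Type*} [CommRing R]

theorem im_star_mul_mul_self_eq_zero {q : ℍ[R]} (hq : q.im = 0) (ρ : ℍ[R]) :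
    (star ρ * q * ρ).im = 0 := by
  have hq_re : (q.re : ℍ[R]) = q := by simpa only [hq, add_zero] using q.re_add_im
  rw [← hq_re, ← Quaternion.coe_commutes, mul_assoc, Quaternion.star_mul_self,
    ← Quaternion.coe_mul, Quaternion.im_coe]

variable [LinearOrder R] [IsStrictOrderedRing R]

theorem commute_of_im_mul_eq_zero {p q : ℍ[R]} (h : (p * q).im = 0) : Commute p q := by
  rcases eq_or_ne p 0 with rfl | hp
  · exact Commute.zero_left q
  have hpq : ((p * q).re : ℍ[R]) = p * q := by simpa only [h, add_zero] using (p * q).re_add_im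
  have hcomm : Commute (p * q) p := hpq ▸ Quaternion.coe_commute _ p
  exact mul_left_cancel₀ hp (hcomm.eq.symm.trans (mul_assoc p q p))

theorem im_mul_mul_star_eq_zero_of_im_star_smul_mul {r s : R} {w z c : ℍ[R]} (hr : r ≠ 0)
    (hs : s ≠ 0) (h : (star (r • w) * (s • z) * c).im = 0) : (z * c * star w).im = 0 := by
  have hscale : star (r • w) * (s • z) * c = (r * s) • (star w * (z * c)) := by
    simp only [Quaternion.star_smul, smul_mul_assoc, mul_smul_comm, smul_smul, mul_assoc,
      mul_comm r s]
  have hreal : (star w * (z * c)).im = 0 := by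
    rw [hscale, Quaternion.im_smul] at h
    exact (smul_eq_zero.mp h).resolve_left (mul_ne_zero hr hs)
  rwa [← (commute_of_im_mul_eq_zero hreal).eq]

end RealProducts

theorem star_mul_self_eq_one_of_norm_eq_one {q : ℍ} (hq : ‖q‖ = 1) : star q * q = 1 := by
  rw [Quaternion.star_mul_self, Quaternion.normSq_eq_norm_mul_self, hq, mul_one,
    Quaternion.coe_one]

theorem exists_norm_eq_one_and_eq_norm_smul (a : ℍ) :
    ∃ z : ℍ, ‖z‖ = 1 ∧ a = ‖a‖ • z ∧ (a.im = 0 → z.im = 0) := by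
  rcases eq_or_ne a 0 with rfl | ha
  · exact ⟨1, norm_one, by rw [norm_zero, zero_smul], fun _ ↦ Quaternion.im_one⟩
  · refine ⟨‖a‖⁻¹ • a, norm_smul_inv_norm (𝕜 := ℝ) ha, ?_, fun h ↦ ?_⟩
    · rw [smul_inv_smul₀ (norm_ne_zero_iff.mpr ha)]
    · rw [Quaternion.im_smul, h, smul_zero]

section Diagonal

variable {R : Type*} [CommRing R] {n : Type*} [DecidableEq n]

/-- The diagonal matrix with entries `zᵢ* ρ`, the change of basis that removes the phases `z` from
a row of a quaternionic matrix. The factor `ρ` stands on the right of every entry, so it acts on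
the conjugated matrix by conjugating each entry. -/
def phaseDiagonal (z : n → ℍ[R]) (ρ : ℍ[R]) : Matrix n n ℍ[R] :=
  diagonal fun i ↦ star (z i) * ρ

theorem phaseDiagonal_fin_three (z₁ z₂ ρ : ℍ[R]) :
    phaseDiagonal ![1, z₁, z₂] ρ = diagonal ![ρ, star z₁ * ρ, star z₂ * ρ] := by
  unfold phaseDiagonal
  congr 1
  funext i
  fin_cases i <;> simp

variable [Fintype n]

theorem phaseDiagonal_conjTranspose_mul_self {z : n → ℍ} {ρ : ℍ} (hz : ∀ i, ‖z i‖ = 1)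
    (hρ : ‖ρ‖ = 1) : (phaseDiagonal z ρ)ᴴ * phaseDiagonal z ρ = 1 := by
  have hentry (i : n) : star (star (z i) * ρ) * (star (z i) * ρ) = 1 :=
    star_mul_self_eq_one_of_norm_eq_one (by rw [norm_mul, norm_star, hz, hρ, one_mul])
  simp only [phaseDiagonal, diagonal_conjTranspose, diagonal_mul_diagonal, Pi.star_apply, hentry,
    diagonal_one]

theorem phaseDiagonal_conjTranspose_mul_mul_apply (z : n → ℍ[R]) (ρ : ℍ[R])
    (A : Matrix n n ℍ[R]) (i j : n) :
    ((phaseDiagonal z ρ)ᴴ * A * phaseDiagonal z ρ) i j =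
      star ρ * (z i * A i j * star (z j)) * ρ := by
  simp only [phaseDiagonal, diagonal_conjTranspose, mul_diagonal, diagonal_mul, Pi.star_apply,
    star_mul, star_star, mul_assoc]

theorem im_phaseDiagonal_conjTranspose_mul_mul_apply_eq_zero [LinearOrder R]
    [IsStrictOrderedRing R] {A : Matrix n n ℍ[R]} {o : n} {r : n → R} {z : n → ℍ[R]}
    (hrow : ∀ i, A o i = r i • z i) (hzo : (z o).im = 0)
    (htri : ∀ i j, i ≠ o → A i j ≠ 0 →
      star (A o j) * A o i * A i j ≠ 0 ∧ (star (A o j) * A o i * A i j).im = 0)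
    (ρ : ℍ[R]) (i j : n) :
    (((phaseDiagonal z ρ)ᴴ * A * phaseDiagonal z ρ) i j).im = 0 := by
  rw [phaseDiagonal_conjTranspose_mul_mul_apply]
  refine im_star_mul_mul_self_eq_zero ?_ ρ
  rcases eq_or_ne i o with rfl | hi
  · rw [hrow, mul_assoc, smul_mul_assoc, Quaternion.self_mul_star, mul_smul_comm,
      ← Quaternion.coe_commutes, Quaternion.coe_mul_eq_smul, Quaternion.im_smul,
      Quaternion.im_smul, hzo, smul_zero, smul_zero]
  rcases eq_or_ne (A i j) 0 with hij | hij
  · rw [hij, mul_zero, zero_mul, Quaternion.im_zero]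
  obtain ⟨hne, hre⟩ := htri i j hi hij
  rw [hrow i, hrow j] at hne hre
  have hri : r i ≠ 0 := fun h ↦ hne (by rw [h, zero_smul, mul_zero, zero_mul])
  have hrj : r j ≠ 0 := fun h ↦ hne (by rw [h, zero_smul, star_zero, zero_mul, zero_mul])
  exact im_mul_mul_star_eq_zero_of_im_star_smul_mul hrj hri hre

theorem unitarily_equivalent_to_real_general (A : Matrix n n ℍ) (o : n) (hdiag : (A o o).im = 0)
    (htri : ∀ i j, i ≠ o → A i j ≠ 0 →
      star (A o j) * A o i * A i j ≠ 0 ∧ (star (A o j) * A o i * A i j).im = 0) :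
    (∃ U : Matrix n n ℍ, Uᴴ * U = 1 ∧ ∀ i j, ((Uᴴ * A * U) i j).im = 0) ∧
    (∀ (ρ : ℍ) (z : n → ℍ), ‖ρ‖ = 1 → (∀ i, ‖z i‖ = 1) → (z o).im = 0 →
      (∀ i, A o i = ‖A o i‖ • z i) →
      (phaseDiagonal z ρ)ᴴ * phaseDiagonal z ρ = 1 ∧
      ∀ i j, (((phaseDiagonal z ρ)ᴴ * A * phaseDiagonal z ρ) i j).im = 0) := by
  refine (and_iff_right_of_imp fun hphase ↦ ?_).mpr fun ρ z hρ hz hzo hrow ↦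
    ⟨phaseDiagonal_conjTranspose_mul_self hz hρ,
      im_phaseDiagonal_conjTranspose_mul_mul_apply_eq_zero hrow hzo htri ρ⟩
  choose z hz hrow hreal using fun i ↦ exists_norm_eq_one_and_eq_norm_smul (A o i)
  exact ⟨_, hphase 1 z norm_one hz (hreal o hdiag) hrow⟩

end Diagonal

theorem eq_one_and_eq_two_of_apply_ne_zero {α : Type*} [Zero α] {A : Matrix (Fin 3) (Fin 3) α}
    (hupper : ∀ i j, j ≤ i → A i j = 0) {i j : Fin 3} (hi : i ≠ 0) (hij : A i j ≠ 0) :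
    i = 1 ∧ j = 2 := by
  have hlt : i < j := lt_of_not_ge fun h ↦ hij (hupper i j h)
  omega

/-- If `A ∈ M₃(ℍ)` is strictly upper triangular and `a₁₃* a₁₂ a₂₃` is a nonzero
real number, then `A` is unitarily equivalent to a real matrix; moreover the unitary can be
taken to be the diagonal matrix `diag(ρ, z₁₂*ρ, z₁₃*ρ)` for any unit quaternion `ρ`, where
`z₁₂, z₁₃` are unit quaternions with `a₁₂ = |a₁₂| z₁₂` and `a₁₃ = |a₁₃| z₁₃`. -/
theorem unitarily_equivalent_to_real (A : Matrix (Fin 3) (Fin 3) (Quaternion ℝ))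
    (hupper : ∀ i j, j ≤ i → A i j = 0)
    (hre : (star (A 0 2) * A 0 1 * A 1 2).im = 0)
    (hne : star (A 0 2) * A 0 1 * A 1 2 ≠ 0) :
    (∃ U : Matrix (Fin 3) (Fin 3) (Quaternion ℝ),
      Uᴴ * U = 1 ∧ ∀ i j, ((Uᴴ * A * U) i j).im = 0) ∧
    (∀ ρ z12 z13 : Quaternion ℝ, ‖ρ‖ = 1 → ‖z12‖ = 1 → ‖z13‖ = 1 →
      A 0 1 = ((‖A 0 1‖ : ℝ) : Quaternion ℝ) * z12 →
      A 0 2 = ((‖A 0 2‖ : ℝ) : Quaternion ℝ) * z13 →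
      (Matrix.diagonal ![ρ, star z12 * ρ, star z13 * ρ])ᴴ *
          (Matrix.diagonal ![ρ, star z12 * ρ, star z13 * ρ]) = 1 ∧
      ∀ i j, (((Matrix.diagonal ![ρ, star z12 * ρ, star z13 * ρ])ᴴ * A *
          (Matrix.diagonal ![ρ, star z12 * ρ, star z13 * ρ])) i j).im = 0) := by
  have hdiag : A 0 0 = 0 := hupper 0 0 le_rfl
  obtain ⟨hU, hphase⟩ := unitarily_equivalent_to_real_general A 0 (by rw [hdiag]; rfl)
    fun i j hi hij ↦ by
      obtain ⟨rfl, rfl⟩ := eq_one_and_eq_two_of_apply_ne_zero hupper hi hij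
      exact ⟨hne, hre⟩
  refine ⟨hU, fun ρ z12 z13 hρ h12 h13 e12 e13 ↦ ?_⟩
  simp only [Quaternion.coe_mul_eq_smul] at e12 e13
  rw [← phaseDiagonal_fin_three]
  exact hphase ρ ![1, z12, z13] hρ (by simp [Fin.forall_fin_succ, h12, h13]) rfl
    (by simpa [Fin.forall_fin_succ, hdiag] using ⟨e12, e13⟩)
end
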